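/- For every real z with 0 ≤ z < 1 there exists a constant C_z > 0, depending only on z, such that for all integers μ ≥ 0 and all real k > 0: 2^{−μ}·‖₂F₁((μ+1/2+ik)/2, (μ+3/2+ik)/2, μ+1; z)‖ ≤ C_z·√(cosh k). -/

import Mathlib

open Real

/-- The Gauss hypergeometric series `₂F₁(a,b,c;z)`. -/
noncomputable def hyp2F1 (a b c z : ℂ) : ℂ :=
  ∑' n : ℕ, (ascPochhammer ℂ n).eval a * (ascPochhammer ℂ n).eval b /
      ((ascPochhammer ℂ n).eval c * (n.factorial : ℂ)) * z ^ n

/-!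
Up to the factor `(s)_μ / μ!` with `s = σ + ik`, the number
`2^{-μ} ₂F₁((μ+s)/2, (μ+s+1)/2, μ+1; z)` is the `μ`-th Laurent coefficient of
`ζ ↦ (1 - (ζ + z/ζ)/2)^{-s}`, so on the circle `‖ζ‖ = r` it is at most `r^{-μ}` times the supremum
of this function. The circle is mapped to an ellipse which is seen from `1` under a half-angle `β`
with `sin β = |r - z/r| / (2√(1-z))`, so the supremum is `O(e^{β|k|})`, whereas `√(cosh k)` has the
order of `e^{|k|/2}`.

At `r = 1` the angle is `arcsin (√(1-z)/2)`, which exceeds `1/2` for small `z`, so the radius has to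
depend on the regime:
* If `μ ≤ |k|`, then `μ! / |(s)_μ| = O((9/10)^μ)`, which pays for a radius `r < 1` with `β ≤ 1/2`.
* If `|k| ≤ μ`, then `μ! / |(s)_μ|` is only `O(μ)`, but for `r > 1` the factor `r^{-μ}` absorbs both
  this and the excess `e^{(β - 1/2)|k|}`.
-/

section Pochhammer

theorem ascPochhammer_eval_two_mul_add {K : Type*} [Field K] [NeZero (2 : K)] (s : K) (n m : ℕ) :
    (ascPochhammer K (2 * n + m)).eval s =
      (ascPochhammer K m).eval s * (4 ^ n * ((ascPochhammer K n).eval ((m + s) / 2) *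
        (ascPochhammer K n).eval ((m + s + 1) / 2))) := by
  induction n with
  | zero => simp
  | succ n ih =>
    have h2 : (2 : K) ≠ 0 := two_ne_zero
    rw [show 2 * (n + 1) + m = 2 * n + m + 1 + 1 by ring]
    simp only [ascPochhammer_succ_eval, ih]
    push_cast
    field_simp
    ring

theorem multichoose_eq_ascPochhammer_eval_div_factorial {K : Type*} [Field K] [CharZero K]
    [BinomialRing K] (s : K) (n : ℕ) :
    Ring.multichoose s n = (ascPochhammer K n).eval s / n.factorial := by
  rw [eq_div_iff (mod_cast n.factorial_ne_zero), mul_comm, ← nsmul_eq_mul,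
    Ring.factorial_nsmul_multichoose_eq_ascPochhammer, Polynomial.ascPochhammer_smeval_eq_eval]

theorem hasSum_one_sub_cpow_neg (s : ℂ) {x : ℂ} (hx : ‖x‖ < 1) :
    HasSum (fun n : ℕ ↦ (ascPochhammer ℂ n).eval s / n.factorial * x ^ n) ((1 - x) ^ (-s)) := by
  have hmem : x ∈ Metric.eball (0 : ℂ) 1 := by simpa [enorm_eq_nnnorm, ← NNReal.coe_lt_one] using hx
  have h := (Complex.one_div_one_sub_cpow_hasFPowerSeriesOnBall_zero s).hasSum hmem
  simpa only [FormalMultilinearSeries.ofScalars_apply_eq, zero_add, smul_eq_mul, Ring.choose,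
    sub_add_cancel, add_sub_cancel_right, sub_sub_cancel_left, one_div, ← Complex.cpow_neg,
    multichoose_eq_ascPochhammer_eval_div_factorial,
    show ∀ n : ℕ, s + n - 1 - n + 1 = s from fun n ↦ by ring] using h

theorem summable_norm_ascPochhammer_eval_div_factorial_mul_pow (s : ℂ) {ρ : ℝ} (hρ0 : 0 ≤ ρ)
    (hρ1 : ρ < 1) :
    Summable fun n : ℕ ↦ ‖(ascPochhammer ℂ n).eval s / n.factorial‖ * ρ ^ n := by
  have hρ : ‖(ρ : ℂ)‖ = ρ := by simp [abs_of_nonneg hρ0]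
  simpa only [norm_mul, norm_pow, hρ] using
    (hasSum_one_sub_cpow_neg s (hρ.trans_lt hρ1)).summable.norm

end Pochhammer

section CircleIntegral

open Metric

theorem hasSum_circleIntegral_of_summable_norm {ι E : Type*} [Countable ι] [NormedAddCommGroup E]
    [NormedSpace ℂ E] [CompleteSpace E] {F : ι → ℂ → E} {f : ℂ → E} {u : ι → ℝ} {c : ℂ} {R : ℝ}
    (hR : 0 ≤ R) (hF : ∀ i, ContinuousOn (F i) (sphere c R)) (hu : Summable u)
    (hFu : ∀ i, ∀ ζ ∈ sphere c R, ‖F i ζ‖ ≤ u i)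
    (hf : ∀ ζ ∈ sphere c R, HasSum (fun i ↦ F i ζ) (f ζ)) :
    HasSum (fun i ↦ ∮ ζ in C(c, R), F i ζ) (∮ ζ in C(c, R), f ζ) := by
  have hsum : ∀ t : Finset ι,
      ∑ i ∈ t, (∮ ζ in C(c, R), F i ζ) = ∮ ζ in C(c, R), ∑ i ∈ t, F i ζ := fun t ↦
    (circleIntegral.integral_fun_sum fun i _ ↦ (hF i).circleIntegrable hR).symm
  have hunif := (tendstoUniformlyOn_tsum hu hFu).congr_right fun ζ hζ ↦ (hf ζ hζ).tsum_eq
  simpa only [HasSum, SummationFilter.unconditional_filter, hsum] using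
    hunif.tendsto_circleIntegral_of_continuousOn hR
      (.of_forall fun t ↦ continuousOn_finsetSum t fun i _ ↦ hF i)

theorem circleIntegral_zpow {R : ℝ} (hR : R ≠ 0) (m : ℤ) :
    (∮ ζ in C(0, R), ζ ^ m) = if m = -1 then 2 * π * Complex.I else 0 := by
  split_ifs with hm
  · simpa [hm] using circleIntegral.integral_sub_center_inv 0 hR
  · simpa using circleIntegral.integral_sub_zpow_of_ne hm 0 0 R

end CircleIntegral

/-- The Joukowsky map `ζ ↦ (ζ + z / ζ) / 2`. It carries the circle `‖ζ‖ = r` to an ellipse centred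
at `0` which, for real `z`, has semi-axes `(r ± z / r) / 2`. -/
noncomputable def joukowsky (z ζ : ℂ) : ℂ := (ζ + z / ζ) / 2

/-- The function `2^{-μ} ₂F₁((μ+s)/2, (μ+s+1)/2, μ+1; z)`; up to the factor `(s)_μ / μ!` it is the
`μ`-th Laurent coefficient of `ζ ↦ (1 - joukowsky z ζ) ^ (-s)`. -/
noncomputable def scaledHyp2F1 (μ : ℕ) (s z : ℂ) : ℂ :=
  (2 ^ μ)⁻¹ * hyp2F1 ((μ + s) / 2) ((μ + s + 1) / 2) (μ + 1) z

section LaurentCoefficient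

open Metric

theorem norm_joukowsky_le (z ζ : ℂ) : ‖joukowsky z ζ‖ ≤ (‖ζ‖ + ‖z‖ / ‖ζ‖) / 2 := by
  rw [joukowsky, norm_div, Complex.norm_ofNat]
  gcongr
  simpa only [norm_div] using norm_add_le ζ (z / ζ)

theorem joukowsky_pow_mul_zpow (z : ℂ) {ζ : ℂ} (hζ : ζ ≠ 0) (N : ℕ) (m : ℤ) :
    joukowsky z ζ ^ N * ζ ^ m =
      ∑ j ∈ Finset.range (N + 1), (N.choose j * z ^ j / 2 ^ N) * ζ ^ (N - 2 * j + m : ℤ) := by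
  rw [joukowsky, div_pow, add_comm, add_pow, Finset.sum_div, Finset.sum_mul]
  refine Finset.sum_congr rfl fun j hj ↦ ?_
  have hjN : j ≤ N := Finset.mem_range_succ_iff.1 hj
  have hpow : ζ ^ (N - 2 * j + m : ℤ) = ζ ^ (N - j) / ζ ^ j * ζ ^ m := by
    rw [← zpow_natCast, ← zpow_natCast, ← zpow_sub₀ hζ, ← zpow_add₀ hζ, Nat.cast_sub hjN]
    congr 1
    ring
  rw [hpow, div_pow]
  ring

theorem circleIntegral_joukowsky_pow_mul_zpow (z : ℂ) {r : ℝ} (hr : 0 < r) (N μ : ℕ) :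
    (∮ ζ in C(0, r), joukowsky z ζ ^ N * ζ ^ (-(μ : ℤ) - 1)) =
      ∑ j ∈ Finset.range (N + 1),
        if N = 2 * j + μ then N.choose j * z ^ j / 2 ^ N * (2 * π * Complex.I) else 0 := by
  have hne : ∀ ζ ∈ sphere (0 : ℂ) r, ζ ≠ 0 := fun ζ hζ ↦ ne_of_mem_sphere hζ hr.ne'
  rw [circleIntegral.integral_congr hr.le fun ζ hζ ↦ joukowsky_pow_mul_zpow z (hne ζ hζ) N _,
    circleIntegral.integral_fun_sum fun j _ ↦ ContinuousOn.circleIntegrable hr.le (by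
      fun_prop (disch := simp_all))]
  refine Finset.sum_congr rfl fun j _ ↦ ?_
  rw [circleIntegral.integral_const_mul, circleIntegral_zpow hr.ne', mul_ite, mul_zero]
  exact if_congr (by lia) rfl rfl

theorem circleIntegral_joukowsky_pow_two_mul_add (z : ℂ) {r : ℝ} (hr : 0 < r) (n μ : ℕ) :
    (∮ ζ in C(0, r), joukowsky z ζ ^ (2 * n + μ) * ζ ^ (-(μ : ℤ) - 1)) =
      (2 * n + μ).choose n * z ^ n / 2 ^ (2 * n + μ) * (2 * π * Complex.I) := by
  rw [circleIntegral_joukowsky_pow_mul_zpow z hr, Finset.sum_eq_single_of_mem n (by simp; lia)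
    fun j _ hj ↦ if_neg (by lia), if_pos rfl]

theorem circleIntegral_joukowsky_pow_eq_zero (z : ℂ) {r : ℝ} (hr : 0 < r) {N μ : ℕ}
    (hN : ∀ n, 2 * n + μ ≠ N) :
    (∮ ζ in C(0, r), joukowsky z ζ ^ N * ζ ^ (-(μ : ℤ) - 1)) = 0 := by
  rw [circleIntegral_joukowsky_pow_mul_zpow z hr]
  exact Finset.sum_eq_zero fun j _ ↦ if_neg (hN j).symm

theorem hasSum_circleIntegral_one_sub_joukowsky_cpow (s z : ℂ) {r : ℝ} (hr : 0 < r)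
    (hrz : (r + ‖z‖ / r) / 2 < 1) (μ : ℕ) :
    HasSum (fun N : ℕ ↦ (ascPochhammer ℂ N).eval s / N.factorial *
        ∮ ζ in C(0, r), joukowsky z ζ ^ N * ζ ^ (-(μ : ℤ) - 1))
      (∮ ζ in C(0, r), (1 - joukowsky z ζ) ^ (-s) * ζ ^ (-(μ : ℤ) - 1)) := by
  have hne : ∀ ζ ∈ sphere (0 : ℂ) r, ζ ≠ 0 := fun ζ hζ ↦ ne_of_mem_sphere hζ hr.ne'
  have hle : ∀ ζ ∈ sphere (0 : ℂ) r, ‖joukowsky z ζ‖ ≤ (r + ‖z‖ / r) / 2 := fun ζ hζ ↦ by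
    simpa only [mem_sphere_zero_iff_norm.1 hζ] using norm_joukowsky_le z ζ
  simp_rw [← circleIntegral.integral_const_mul, ← mul_assoc]
  refine hasSum_circleIntegral_of_summable_norm hr.le (fun N ↦ ?_)
    ((summable_norm_ascPochhammer_eval_div_factorial_mul_pow s (by positivity) hrz).mul_right
      (r ^ (-(μ : ℤ) - 1))) (fun N ζ hζ ↦ ?_) fun ζ hζ ↦ ?_
  · unfold joukowsky
    fun_prop (disch := simp_all)
  · rw [norm_mul, norm_mul, norm_pow, norm_zpow, mem_sphere_zero_iff_norm.1 hζ]
    gcongr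
    exact hle ζ hζ
  · exact (hasSum_one_sub_cpow_neg s ((hle ζ hζ).trans_lt hrz)).mul_right _

theorem ascPochhammer_div_factorial_mul_choose (s z : ℂ) (n μ : ℕ) :
    (ascPochhammer ℂ (2 * n + μ)).eval s / (2 * n + μ).factorial *
        ((2 * n + μ).choose n * z ^ n / 2 ^ (2 * n + μ)) =
      (ascPochhammer ℂ μ).eval s / μ.factorial * (2 ^ μ)⁻¹ *
        ((ascPochhammer ℂ n).eval ((μ + s) / 2) * (ascPochhammer ℂ n).eval ((μ + s + 1) / 2) /
          ((ascPochhammer ℂ n).eval ((μ : ℂ) + 1) * n.factorial) * z ^ n) := by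
  have hn : (n.factorial : ℂ) ≠ 0 := mod_cast n.factorial_ne_zero
  have hμ : (μ.factorial : ℂ) ≠ 0 := mod_cast μ.factorial_ne_zero
  have hnμ : ((μ + n).factorial : ℂ) ≠ 0 := mod_cast (μ + n).factorial_ne_zero
  have hN : ((2 * n + μ).factorial : ℂ) ≠ 0 := mod_cast (2 * n + μ).factorial_ne_zero
  have hpoch : (ascPochhammer ℂ n).eval ((μ : ℂ) + 1) = (μ + n).factorial / μ.factorial := by
    rw [eq_div_iff hμ, mul_comm, factorial_mul_ascPochhammer]
  rw [ascPochhammer_eval_two_mul_add, hpoch, Nat.cast_choose ℂ (by lia : n ≤ 2 * n + μ),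
    show 2 * n + μ - n = μ + n by lia, pow_add, pow_mul, show (2 : ℂ) ^ 2 = 4 by norm_num]
  field_simp

theorem ascPochhammer_mul_scaledHyp2F1_eq_circleIntegral (s z : ℂ) {r : ℝ} (hr : 0 < r)
    (hrz : (r + ‖z‖ / r) / 2 < 1) (μ : ℕ) :
    (ascPochhammer ℂ μ).eval s / μ.factorial * scaledHyp2F1 μ s z =
      (2 * π * Complex.I)⁻¹ •
        ∮ ζ in C(0, r), (1 - joukowsky z ζ) ^ (-s) * ζ ^ (-(μ : ℤ) - 1) := by
  have hinj : Function.Injective fun n : ℕ ↦ 2 * n + μ := fun m n h ↦ by simpa using h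
  have hsum := hasSum_circleIntegral_one_sub_joukowsky_cpow s z hr hrz μ
  rw [← hinj.hasSum_iff fun N hN ↦ by
    rw [circleIntegral_joukowsky_pow_eq_zero z hr fun n hn ↦ hN ⟨n, hn⟩, mul_zero]] at hsum
  have hcoeff : HasSum (fun n : ℕ ↦ (ascPochhammer ℂ μ).eval s / μ.factorial * (2 ^ μ)⁻¹ *
      ((ascPochhammer ℂ n).eval ((μ + s) / 2) * (ascPochhammer ℂ n).eval ((μ + s + 1) / 2) /
        ((ascPochhammer ℂ n).eval ((μ : ℂ) + 1) * n.factorial) * z ^ n) * (2 * π * Complex.I))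
      (∮ ζ in C(0, r), (1 - joukowsky z ζ) ^ (-s) * ζ ^ (-(μ : ℤ) - 1)) := by
    refine hsum.congr_fun fun n ↦ ?_
    rw [← ascPochhammer_div_factorial_mul_choose, Function.comp_apply,
      circleIntegral_joukowsky_pow_two_mul_add z hr, mul_assoc]
  rw [← hcoeff.tsum_eq, tsum_mul_right, tsum_mul_left, scaledHyp2F1, hyp2F1, smul_eq_mul,
    mul_comm _ (2 * π * Complex.I), inv_mul_cancel_left₀ Complex.two_pi_I_ne_zero, mul_assoc]

theorem pow_mul_norm_ascPochhammer_mul_scaledHyp2F1_le (s z : ℂ) {r M : ℝ} (hr : 0 < r)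
    (hrz : (r + ‖z‖ / r) / 2 < 1) (hM : ∀ ζ : ℂ, ‖ζ‖ = r → ‖(1 - joukowsky z ζ) ^ (-s)‖ ≤ M)
    (μ : ℕ) :
    r ^ μ * (‖(ascPochhammer ℂ μ).eval s‖ / μ.factorial * ‖scaledHyp2F1 μ s z‖) ≤ M := by
  have hint : ‖(ascPochhammer ℂ μ).eval s / μ.factorial * scaledHyp2F1 μ s z‖ ≤
      r * (M * r ^ (-(μ : ℤ) - 1)) := by
    rw [ascPochhammer_mul_scaledHyp2F1_eq_circleIntegral s z hr hrz]
    refine circleIntegral.norm_two_pi_i_inv_smul_integral_le_of_norm_le_const hr.le fun ζ hζ ↦ ?_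
    rw [mem_sphere_zero_iff_norm] at hζ
    rw [norm_mul, norm_zpow, hζ]
    gcongr
    exact hM ζ hζ
  calc r ^ μ * (‖(ascPochhammer ℂ μ).eval s‖ / μ.factorial * ‖scaledHyp2F1 μ s z‖)
      = r ^ μ * ‖(ascPochhammer ℂ μ).eval s / μ.factorial * scaledHyp2F1 μ s z‖ := by
        rw [norm_mul, norm_div, Complex.norm_natCast]
    _ ≤ r ^ μ * (r * (M * r ^ (-(μ : ℤ) - 1))) := by gcongr
    _ = M := by
      rw [zpow_sub₀ hr.ne', zpow_neg, zpow_natCast, zpow_one]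
      field_simp

end LaurentCoefficient

section EllipseGeometry

theorem abs_arg_le_of_abs_im_le_sin_mul_norm {w : ℂ} {β : ℝ} (hw : 0 ≤ w.re) (hβ0 : 0 ≤ β)
    (hβ : β ≤ π / 2) (h : |w.im| ≤ sin β * ‖w‖) : |w.arg| ≤ β := by
  rcases eq_or_ne w 0 with rfl | hw0
  · simpa using hβ0
  have hnorm : 0 < ‖w‖ := norm_pos_iff.2 hw0
  have hdiv : |w.im / ‖w‖| ≤ sin β := by rwa [abs_div, abs_norm, div_le_iff₀ hnorm]
  rw [Complex.arg_of_re_nonneg hw, abs_le, ← arcsin_sin (by linarith) hβ, ← arcsin_neg]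
  exact ⟨arcsin_le_arcsin (neg_le_of_abs_le hdiv), arcsin_le_arcsin (le_of_abs_le hdiv)⟩

theorem norm_cpow_neg_le_of_le_norm_of_abs_arg_le {w s : ℂ} {δ β : ℝ} (hδ : 0 < δ) (hδw : δ ≤ ‖w‖)
    (hβ : |w.arg| ≤ β) (hs : 0 ≤ s.re) :
    ‖w ^ (-s)‖ ≤ δ ^ (-s.re) * exp (β * |s.im|) := by
  have hw : w ≠ 0 := norm_pos_iff.1 (hδ.trans_le hδw)
  have harg : w.arg * s.im ≤ β * |s.im| := calc
    w.arg * s.im ≤ |w.arg| * |s.im| := by rw [← abs_mul]; exact le_abs_self _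
    _ ≤ β * |s.im| := by gcongr
  rw [Complex.norm_cpow_of_ne_zero hw, Complex.neg_re, Complex.neg_im, mul_neg, exp_neg,
    div_inv_eq_mul]
  exact mul_le_mul (rpow_le_rpow_of_nonpos hδ hδw (neg_nonpos.2 hs)) (exp_le_exp.2 harg)
    (exp_nonneg _) (rpow_nonneg hδ.le _)

-- `b / √(1 - a² + b²)` is the sine of the angle between the real axis and the tangents from `1` to
-- the ellipse with semi-axes `a` and `b`.
theorem sq_mul_le_sq_mul_of_ellipse (a b : ℝ) {c t : ℝ} (hct : c ^ 2 + t ^ 2 = 1) :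
    (b * t) ^ 2 * (1 - a ^ 2 + b ^ 2) ≤ b ^ 2 * ((1 - a * c) ^ 2 + (b * t) ^ 2) := by
  have hdiff : b ^ 2 * ((1 - a * c) ^ 2 + (b * t) ^ 2) - (b * t) ^ 2 * (1 - a ^ 2 + b ^ 2) =
      (b * (a - c)) ^ 2 := by
    linear_combination (-(b ^ 2 * (1 - a ^ 2))) * hct
  linarith [sq_nonneg (b * (a - c))]

theorem joukowsky_ofReal_re (z : ℝ) (ζ : ℂ) :
    (joukowsky z ζ).re = (‖ζ‖ + z / ‖ζ‖) / 2 * (ζ.re / ‖ζ‖) := by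
  rcases eq_or_ne ζ 0 with rfl | hζ
  · simp [joukowsky]
  have hnorm : ‖ζ‖ ≠ 0 := norm_ne_zero_iff.2 hζ
  simp only [joukowsky, Complex.div_ofNat_re, Complex.add_re, Complex.div_re, Complex.ofReal_re,
    Complex.ofReal_im, Complex.normSq_eq_norm_sq]
  field_simp
  ring

theorem joukowsky_ofReal_im (z : ℝ) (ζ : ℂ) :
    (joukowsky z ζ).im = (‖ζ‖ - z / ‖ζ‖) / 2 * (ζ.im / ‖ζ‖) := by
  rcases eq_or_ne ζ 0 with rfl | hζ
  · simp [joukowsky]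
  have hnorm : ‖ζ‖ ≠ 0 := norm_ne_zero_iff.2 hζ
  simp only [joukowsky, Complex.div_ofNat_im, Complex.add_im, Complex.div_im, Complex.ofReal_re,
    Complex.ofReal_im, Complex.normSq_eq_norm_sq]
  field_simp
  ring

theorem im_joukowsky_sq_mul_le (z : ℝ) {ζ : ℂ} (hζ : ζ ≠ 0) :
    (joukowsky z ζ).im ^ 2 * (1 - z) ≤
      ((‖ζ‖ - z / ‖ζ‖) / 2) ^ 2 * ‖1 - joukowsky z ζ‖ ^ 2 := by
  have hnorm : ‖ζ‖ ≠ 0 := norm_ne_zero_iff.2 hζ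
  have hunit : (ζ.re / ‖ζ‖) ^ 2 + (ζ.im / ‖ζ‖) ^ 2 = 1 := by
    rw [div_pow, div_pow, ← add_div, div_eq_one_iff_eq (pow_ne_zero 2 hnorm), Complex.sq_norm,
      Complex.normSq_apply]
    ring
  have haxes : 1 - z = 1 - ((‖ζ‖ + z / ‖ζ‖) / 2) ^ 2 + ((‖ζ‖ - z / ‖ζ‖) / 2) ^ 2 := by
    field_simp
    ring
  have hsq : ‖1 - joukowsky z ζ‖ ^ 2 = (1 - (joukowsky z ζ).re) ^ 2 + (joukowsky z ζ).im ^ 2 := by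
    rw [Complex.sq_norm, Complex.normSq_apply]
    simp only [Complex.sub_re, Complex.sub_im, Complex.one_re, Complex.one_im]
    ring
  rw [hsq, haxes, joukowsky_ofReal_re, joukowsky_ofReal_im]
  exact sq_mul_le_sq_mul_of_ellipse _ _ hunit

theorem abs_arg_one_sub_joukowsky_le {z r β : ℝ} {ζ : ℂ} (hz : z < 1) (hr : 0 < r) (hζ : ‖ζ‖ = r)
    (hre : 0 ≤ (1 - joukowsky z ζ).re) (hβ0 : 0 ≤ β) (hβ : β ≤ π / 2)
    (hb : |r - z / r| / 2 ≤ sin β * √(1 - z)) : |(1 - joukowsky z ζ).arg| ≤ β := by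
  have hsin : 0 ≤ sin β := sin_nonneg_of_nonneg_of_le_pi hβ0 (by linarith [pi_pos])
  have hz' : 0 < 1 - z := by linarith
  refine abs_arg_le_of_abs_im_le_sin_mul_norm hre hβ0 hβ (abs_le_of_sq_le_sq ?_ (by positivity))
  refine le_of_mul_le_mul_right ?_ hz'
  calc (1 - joukowsky z ζ).im ^ 2 * (1 - z)
      = (joukowsky z ζ).im ^ 2 * (1 - z) := by simp
    _ ≤ ((r - z / r) / 2) ^ 2 * ‖1 - joukowsky z ζ‖ ^ 2 := by
      rw [← hζ]
      exact im_joukowsky_sq_mul_le z (norm_pos_iff.1 (hζ ▸ hr))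
    _ = (|r - z / r| / 2) ^ 2 * ‖1 - joukowsky z ζ‖ ^ 2 := by rw [div_pow, div_pow, sq_abs]
    _ ≤ (sin β * √(1 - z)) ^ 2 * ‖1 - joukowsky z ζ‖ ^ 2 := by gcongr
    _ = (sin β * ‖1 - joukowsky z ζ‖) ^ 2 * (1 - z) := by
      rw [mul_pow, mul_pow, sq_sqrt hz'.le]
      ring

theorem norm_one_sub_joukowsky_cpow_neg_le {z r β : ℝ} {s ζ : ℂ} (hz0 : 0 ≤ z) (hz1 : z < 1)
    (hr : 0 < r) (hζ : ‖ζ‖ = r) (ha : (r + z / r) / 2 < 1) (hβ0 : 0 ≤ β) (hβ : β ≤ π / 2)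
    (hb : |r - z / r| / 2 ≤ sin β * √(1 - z)) (hs : 0 ≤ s.re) :
    ‖(1 - joukowsky z ζ) ^ (-s)‖ ≤ (1 - (r + z / r) / 2) ^ (-s.re) * exp (β * |s.im|) := by
  have hre : 1 - (r + z / r) / 2 ≤ (1 - joukowsky z ζ).re := by
    have hle := (Complex.re_le_norm _).trans (norm_joukowsky_le z ζ)
    rw [hζ, Complex.norm_of_nonneg hz0] at hle
    rw [Complex.sub_re, Complex.one_re]
    linarith
  refine norm_cpow_neg_le_of_le_norm_of_abs_arg_le (by linarith)
    (hre.trans (Complex.re_le_norm _)) ?_ hs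
  exact abs_arg_one_sub_joukowsky_le hz1 hr hζ (by linarith) hβ0 hβ hb

end EllipseGeometry

section PochhammerLowerBounds

theorem factorial_le_mul_norm_ascPochhammer_eval {s : ℂ} (hs : 0 < s.re) (μ : ℕ) :
    (μ.factorial : ℝ) ≤ (1 + μ * s.re⁻¹) * ‖(ascPochhammer ℂ μ).eval s‖ := by
  induction μ with
  | zero => simp
  | succ n ih =>
    have hstep : s.re + n ≤ ‖s + n‖ := by simpa using Complex.re_le_norm (s + n)
    rw [ascPochhammer_succ_eval, norm_mul, Nat.factorial_succ]
    push_cast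
    calc ((n : ℝ) + 1) * n.factorial
        ≤ (n + 1) * ((1 + n * s.re⁻¹) * ‖(ascPochhammer ℂ n).eval s‖) := by gcongr
      _ = ((n + 1) * s.re⁻¹) * (‖(ascPochhammer ℂ n).eval s‖ * (s.re + n)) := by field_simp
      _ ≤ (1 + (n + 1) * s.re⁻¹) * (‖(ascPochhammer ℂ n).eval s‖ * ‖s + n‖) := by
        gcongr
        linarith

theorem mul_succ_le_norm_add_natCast {s : ℂ} {n : ℕ} (hs : 0 ≤ s.re) (hn : n ≠ 0)
    (him : (n : ℝ) + 1 ≤ |s.im|) : 10 / 9 * ((n : ℝ) + 1) ≤ ‖s + n‖ := by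
  have hn1 : (1 : ℝ) ≤ n := mod_cast Nat.one_le_iff_ne_zero.2 hn
  have hsq : ‖s + n‖ ^ 2 = (s.re + n) ^ 2 + |s.im| ^ 2 := by
    rw [Complex.sq_norm, Complex.normSq_apply, sq_abs]
    simp only [Complex.add_re, Complex.add_im, Complex.natCast_re, Complex.natCast_im]
    ring
  refine le_of_sq_le_sq ?_ (norm_nonneg _)
  calc (10 / 9 * ((n : ℝ) + 1)) ^ 2 ≤ n ^ 2 + (n + 1) ^ 2 := by nlinarith
    _ ≤ ‖s + n‖ ^ 2 := by
      rw [hsq]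
      gcongr
      linarith

theorem factorial_le_pow_mul_norm_ascPochhammer_eval {s : ℂ} (hs : 0 ≤ s.re) {μ : ℕ}
    (him : (μ : ℝ) ≤ |s.im|) :
    (μ.factorial : ℝ) ≤ 10 / 9 * (9 / 10) ^ μ * ‖(ascPochhammer ℂ μ).eval s‖ := by
  induction μ with
  | zero => norm_num
  | succ n ih =>
    push_cast at him
    rcases eq_or_ne n 0 with rfl | hn
    · have hone : 1 ≤ ‖s‖ := le_trans (by simpa using him) (Complex.abs_im_le_norm s)
      simpa using hone
    have hstep := mul_succ_le_norm_add_natCast hs hn him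
    rw [ascPochhammer_succ_eval, norm_mul, Nat.factorial_succ]
    push_cast
    calc ((n : ℝ) + 1) * n.factorial
        ≤ (n + 1) * (10 / 9 * (9 / 10) ^ n * ‖(ascPochhammer ℂ n).eval s‖) := by
          gcongr
          exact ih (by linarith)
      _ = 10 / 9 * (9 / 10) ^ (n + 1) *
          (‖(ascPochhammer ℂ n).eval s‖ * (10 / 9 * (n + 1))) := by rw [pow_succ]; ring
      _ ≤ 10 / 9 * (9 / 10) ^ (n + 1) * (‖(ascPochhammer ℂ n).eval s‖ * ‖s + n‖) := by gcongr

end PochhammerLowerBounds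

section UniformBounds

theorem pow_mul_norm_scaledHyp2F1_le {z r β T : ℝ} {s : ℂ} {μ : ℕ} (hz0 : 0 ≤ z) (hz1 : z < 1)
    (hr : 0 < r) (ha : (r + z / r) / 2 < 1) (hβ0 : 0 ≤ β) (hβ : β ≤ π / 2)
    (hb : |r - z / r| / 2 ≤ sin β * √(1 - z)) (hs : 0 ≤ s.re)
    (hT : (μ.factorial : ℝ) ≤ T * ‖(ascPochhammer ℂ μ).eval s‖) :
    r ^ μ * ‖scaledHyp2F1 μ s z‖ ≤
      T * ((1 - (r + z / r) / 2) ^ (-s.re) * exp (β * |s.im|)) := by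
  set P := ‖(ascPochhammer ℂ μ).eval s‖
  set M := (1 - (r + z / r) / 2) ^ (-s.re) * exp (β * |s.im|)
  have hfact : (0 : ℝ) < μ.factorial := mod_cast μ.factorial_pos
  have hP : 0 < P := (norm_nonneg _).lt_of_ne' fun h ↦ by
    rw [show P = 0 from h, mul_zero] at hT
    exact hfact.not_ge hT
  have : 0 ≤ M := mul_nonneg (rpow_nonneg (by linarith) _) (exp_nonneg _)
  have hcauchy : r ^ μ * (P / μ.factorial * ‖scaledHyp2F1 μ s z‖) ≤ M := by
    have hnorm : ‖(z : ℂ)‖ = z := Complex.norm_of_nonneg hz0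
    exact pow_mul_norm_ascPochhammer_mul_scaledHyp2F1_le s z hr (by rwa [hnorm])
      (fun ζ hζ ↦ norm_one_sub_joukowsky_cpow_neg_le hz0 hz1 hr hζ ha hβ0 hβ hb hs) μ
  refine le_of_mul_le_mul_right ?_ hP
  calc r ^ μ * ‖scaledHyp2F1 μ s z‖ * P
      = μ.factorial * (r ^ μ * (P / μ.factorial * ‖scaledHyp2F1 μ s z‖)) := by field_simp
    _ ≤ μ.factorial * M := by gcongr
    _ ≤ T * P * M := by gcongr
    _ = T * M * P := by ring

theorem add_div_div_two_lt_one {z r : ℝ} (hr : 0 < r) (h : (r - 1) ^ 2 < 1 - z) :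
    (r + z / r) / 2 < 1 := by
  have hdiv : z / r < 2 - r := by
    rw [div_lt_iff₀ hr]
    linarith
  linarith

theorem abs_sub_div_div_two_le {z r τ : ℝ} (hr : 0 < r) (h : |r ^ 2 - z| ≤ 2 * τ * r) :
    |r - z / r| / 2 ≤ τ := by
  have habs : |r - z / r| = |r ^ 2 - z| / r := by
    rw [← abs_of_pos hr, ← abs_div, abs_of_pos hr]
    congr 1
    field_simp
  rw [habs, div_le_iff₀ two_pos, div_le_iff₀ hr]
  linarith

theorem exists_norm_scaledHyp2F1_le_of_natCast_le_abs_im {z σ : ℝ} (hz0 : 0 ≤ z) (hz1 : z < 1)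
    (hσ : 0 ≤ σ) :
    ∃ C > 0, ∀ (μ : ℕ) (s : ℂ), s.re = σ → (μ : ℝ) ≤ |s.im| →
      ‖scaledHyp2F1 μ s z‖ ≤ C * exp (|s.im| / 2) := by
  set d := √(1 - z)
  have hd0 : 0 < d := sqrt_pos.2 (by linarith)
  have hdsq : d ^ 2 = 1 - z := sq_sqrt (by linarith)
  have hd1 : d ≤ 1 := by nlinarith
  set r := 1 - d / 10 with hrd
  have hr : 0 < r := by linarith
  have ha : (r + z / r) / 2 < 1 := add_div_div_two_lt_one hr (by nlinarith)
  have hsin : 9 / 20 ≤ sin (1 / 2) := by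
    have := sin_gt_sub_cube (x := 1 / 2) (by norm_num)
    linarith
  have hb : |r - z / r| / 2 ≤ sin (1 / 2) * d := by
    refine (abs_sub_div_div_two_le (τ := 9 / 20 * d) hr ?_).trans (by gcongr)
    rw [abs_le]
    constructor <;> nlinarith
  set K := (1 - (r + z / r) / 2) ^ (-σ)
  have : 0 < K := rpow_pos_of_pos (by linarith) _
  refine ⟨10 / 9 * K, by positivity, fun μ s hsσ him ↦ ?_⟩
  have hs : 0 ≤ s.re := hsσ ▸ hσ
  have hbound := pow_mul_norm_scaledHyp2F1_le hz0 hz1 hr ha (by norm_num)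
    (by linarith [pi_gt_three]) hb hs (factorial_le_pow_mul_norm_ascPochhammer_eval hs him)
  rw [hsσ] at hbound
  refine le_of_mul_le_mul_left ?_ (pow_pos hr μ)
  calc r ^ μ * ‖scaledHyp2F1 μ s z‖ ≤ 10 / 9 * (9 / 10) ^ μ * (K * exp (1 / 2 * |s.im|)) := hbound
    _ ≤ 10 / 9 * r ^ μ * (K * exp (1 / 2 * |s.im|)) := by
      gcongr
      linarith
    _ = r ^ μ * (10 / 9 * K * exp (|s.im| / 2)) := by
      rw [one_div_mul_eq_div]
      ring

theorem exists_one_add_mul_le_mul_pow {c ρ : ℝ} (hc : 0 ≤ c) (hρ : 1 < ρ) :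
    ∃ D > 0, ∀ n : ℕ, 1 + n * c ≤ D * ρ ^ n := by
  have hρ0 : 0 < ρ - 1 := sub_pos.2 hρ
  refine ⟨1 + c / (ρ - 1), by positivity, fun n ↦ ?_⟩
  calc 1 + n * c ≤ 1 + n * c + (n * (ρ - 1) + c / (ρ - 1)) := by
        have : 0 ≤ n * (ρ - 1) + c / (ρ - 1) := by positivity
        linarith
    _ = (1 + c / (ρ - 1)) * (1 + n * (ρ - 1)) := by
      field_simp
      ring
    _ ≤ (1 + c / (ρ - 1)) * ρ ^ n := by
      gcongr
      simpa using one_add_mul_le_pow (a := ρ - 1) (by linarith) n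

theorem two_fifths_add_mul_le_two_mul_sin_mul {d : ℝ} (hd0 : 0 ≤ d) (hd1 : d ≤ 1) :
    2 / 5 + 26 / 25 * d ≤ 2 * sin (1 / 2 + 4 / 25 * d) * (1 + d / 5) := by
  have hsin : 479 / 1000 + 13 / 100 * d ≤ sin (1 / 2 + 4 / 25 * d) := calc
    479 / 1000 + 13 / 100 * d
      ≤ 1 / 2 + 4 / 25 * d - (1 / 2 + 4 / 25 * d) ^ 3 / 6 := by
        nlinarith [mul_nonneg hd0 hd0, mul_nonneg (mul_nonneg hd0 hd0) (sub_nonneg.2 hd1)]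
    _ ≤ sin (1 / 2 + 4 / 25 * d) := (sin_gt_sub_cube (by positivity)).le
  calc 2 / 5 + 26 / 25 * d ≤ 2 * (479 / 1000 + 13 / 100 * d) * (1 + d / 5) := by nlinarith
    _ ≤ 2 * sin (1 / 2 + 4 / 25 * d) * (1 + d / 5) := by gcongr

theorem exp_mul_lt_one_add_div {d : ℝ} (hd0 : 0 < d) (hd1 : d ≤ 1) :
    exp (4 / 25 * d) < 1 + d / 5 := by
  refine (exp_bound_div_one_sub_of_interval (by positivity) (by linarith)).trans_lt ?_
  rw [div_lt_iff₀ (by linarith)]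
  nlinarith

theorem exists_norm_scaledHyp2F1_le_of_abs_im_le_natCast {z σ : ℝ} (hz0 : 0 ≤ z) (hz1 : z < 1)
    (hσ : 0 < σ) :
    ∃ C > 0, ∀ (μ : ℕ) (s : ℂ), s.re = σ → |s.im| ≤ μ →
      ‖scaledHyp2F1 μ s z‖ ≤ C * exp (|s.im| / 2) := by
  set d := √(1 - z)
  have hd0 : 0 < d := sqrt_pos.2 (by linarith)
  have hdsq : d ^ 2 = 1 - z := sq_sqrt (by linarith)
  have hd1 : d ≤ 1 := by nlinarith
  set r := 1 + d / 5 with hrd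
  set ε := 4 / 25 * d with hεd
  have hr : 0 < r := by linarith
  have ha : (r + z / r) / 2 < 1 := add_div_div_two_lt_one hr (by nlinarith)
  -- The left side is `(r ^ 2 - z) / d`.
  have hsin : 2 / 5 + 26 / 25 * d ≤ 2 * sin (1 / 2 + ε) * r :=
    two_fifths_add_mul_le_two_mul_sin_mul hd0.le hd1
  have hb : |r - z / r| / 2 ≤ sin (1 / 2 + ε) * d := by
    refine abs_sub_div_div_two_le hr ?_
    rw [abs_le]
    constructor <;> nlinarith
  obtain ⟨D, hD0, hD⟩ := exists_one_add_mul_le_mul_pow (inv_nonneg.2 hσ.le)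
    ((one_lt_div (exp_pos ε)).2 (exp_mul_lt_one_add_div hd0 hd1))
  set K := (1 - (r + z / r) / 2) ^ (-σ)
  have : 0 < K := rpow_pos_of_pos (by linarith) _
  refine ⟨D * K, by positivity, fun μ s hsσ him ↦ ?_⟩
  have hs : 0 < s.re := hsσ ▸ hσ
  have hbound := pow_mul_norm_scaledHyp2F1_le hz0 hz1 hr ha (by positivity)
    (by linarith [pi_gt_three]) hb hs.le (factorial_le_mul_norm_ascPochhammer_eval hs μ)
  rw [hsσ] at hbound
  have hexp_im : exp ((1 / 2 + ε) * |s.im|) ≤ exp ε ^ μ * exp (|s.im| / 2) := by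
    rw [← exp_nat_mul, ← exp_add, exp_le_exp]
    nlinarith
  refine le_of_mul_le_mul_left ?_ (pow_pos hr μ)
  calc r ^ μ * ‖scaledHyp2F1 μ s z‖
      ≤ (1 + μ * σ⁻¹) * (K * exp ((1 / 2 + ε) * |s.im|)) := hbound
    _ ≤ D * (r / exp ε) ^ μ * (K * (exp ε ^ μ * exp (|s.im| / 2))) := by
      gcongr
      exact hD μ
    _ = r ^ μ * (D * K * exp (|s.im| / 2)) := by
      rw [div_pow]
      field_simp

theorem exp_abs_div_two_le_sqrt_two_mul_sqrt_cosh (x : ℝ) : exp (|x| / 2) ≤ √2 * √(cosh x) := by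
  rw [exp_half, ← sqrt_mul zero_le_two, cosh_eq]
  exact sqrt_le_sqrt ((exp_abs_le x).trans_eq (by ring))

end UniformBounds

theorem hyp2F1_bound_general (z σ : ℝ) (hz0 : 0 ≤ z) (hz1 : z < 1) (hσ : 0 < σ) :
    ∃ C > 0, ∀ (μ : ℕ) (k : ℝ),
      (2 : ℝ) ^ (-(μ : ℝ)) *
          ‖hyp2F1 (((μ : ℂ) + σ + Complex.I * k) / 2)
            (((μ : ℂ) + (σ + 1) + Complex.I * k) / 2) ((μ : ℂ) + 1) (z : ℂ)‖ ≤
        C * √(cosh k) := by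
  obtain ⟨C₁, hC₁, hlarge⟩ := exists_norm_scaledHyp2F1_le_of_natCast_le_abs_im hz0 hz1 hσ.le
  obtain ⟨C₂, -, hsmall⟩ := exists_norm_scaledHyp2F1_le_of_abs_im_le_natCast hz0 hz1 hσ
  refine ⟨max C₁ C₂ * √2, by positivity, fun μ k ↦ ?_⟩
  set s : ℂ := σ + Complex.I * k with hs
  have hre : s.re = σ := by simp [hs]
  have him : s.im = k := by simp [hs]
  calc (2 : ℝ) ^ (-(μ : ℝ)) * ‖hyp2F1 (((μ : ℂ) + σ + Complex.I * k) / 2)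
          (((μ : ℂ) + (σ + 1) + Complex.I * k) / 2) ((μ : ℂ) + 1) (z : ℂ)‖
      = ‖scaledHyp2F1 μ s z‖ := by
        rw [scaledHyp2F1, norm_mul, rpow_neg zero_le_two, rpow_natCast, hs]
        simp only [norm_inv, norm_pow, Complex.norm_ofNat]
        congr 3 <;> ring
    _ ≤ max C₁ C₂ * exp (|k| / 2) := by
      rcases le_total (μ : ℝ) |k| with hk | hk
      · grw [hlarge μ s hre (by rwa [him]), him, ← le_max_left]
      · grw [hsmall μ s hre (by rwa [him]), him, ← le_max_right]
    _ ≤ max C₁ C₂ * (√2 * √(cosh k)) := by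
      gcongr
      exact exp_abs_div_two_le_sqrt_two_mul_sqrt_cosh k
    _ = max C₁ C₂ * √2 * √(cosh k) := by ring

/-- For fixed `z ∈ [0,1)` the bound
`2^{-μ} |₂F₁((μ+1/2+ik)/2, (μ+3/2+ik)/2, μ+1; z)| ≤ C_z √(cosh k)` holds
uniformly in the integer `μ ≥ 0` and the real `k > 0`. -/
theorem hyp2F1_bound (z : ℝ) (hz0 : 0 ≤ z) (hz1 : z < 1) :
    ∃ C > 0, ∀ (μ : ℕ) (k : ℝ), 0 < k →
      (2 : ℝ) ^ (-(μ : ℝ)) *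
          ‖hyp2F1 (((μ : ℂ) + 1 / 2 + Complex.I * k) / 2)
            (((μ : ℂ) + 3 / 2 + Complex.I * k) / 2) ((μ : ℂ) + 1) (z : ℂ)‖ ≤
        C * Real.sqrt (Real.cosh k) := by
  obtain ⟨C, hC, h⟩ := hyp2F1_bound_general z (1 / 2) hz0 hz1 one_half_pos
  exact ⟨C, hC, fun μ k _ ↦ by convert h μ k using 5 <;> push_cast <;> ring⟩
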